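/- Let E and F be pseudo-normed real vector spaces, a ∈ ℝ, q ∈ [1,∞], and let (X^σ,‖·‖_{X^σ})_{σ≥a} and (Y^σ,‖·‖_{Y^σ})_{σ≥a} be scales of pseudo-normed vector spaces of type (q,E) and (q,F) respectively, with associated maps (L_X,R_X) and (L_Y,R_Y). Let a ≤ s_0 < s < s_1 and r > 0, and let Φ : B_s(0,r) → Y^{s_0} (where B_s(0,r) = {v ∈ X^s : ‖v‖_{X^s} < r}) satisfy: (contraction) there is C₀ > 0 with ‖Φ(v)−Φ(w)‖_{Y^{s_0}_∞} ≤ C₀‖v−w‖_{X^{s_0}_1} for all v,w ∈ B_s(0,r); (tame) there is C₁ > 0 with ‖Φ(v)‖_{Y^{s_1}_∞} ≤ C₁‖v‖_{X^{s_1}_1} for all v ∈ X^∞_1 ∩ B_s(0,r). Then Φ(v) ∈ Y^s for all v ∈ B_s(0,r), and the mapping Φ : B_s(0,r) → Y^s is continuous (with respect to the distances induced by ‖·‖_{X^s} and ‖·‖_{Y^s}). -/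

import Mathlib

open Filter
open scoped ENNReal NNReal

/-- A pseudo-norm on a real vector space: nonnegative, symmetric, subadditive,
and vanishing exactly at `0`. -/
structure IsPseudoNorm {E : Type*} [AddCommGroup E] [Module ℝ E] (N : E → ℝ) : Prop where
  nonneg : ∀ x, 0 ≤ N x
  neg : ∀ x, N (-x) = N x
  add_le : ∀ x y, N (x + y) ≤ N x + N y
  eq_zero_iff : ∀ x, N x = 0 ↔ x = 0

/-- The `Σ^s_q(E)` pseudo-norm of a sequence `f : ℕ → E`:
`(∑_k 2^{qks} ‖f_k‖_E^q)^{1/q}` for `q < ∞` and `sup_k 2^{ks} ‖f_k‖_E` for `q = ∞`. -/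
noncomputable def sigmaNorm {E : Type*} (N : E → ℝ) (s : ℝ) (q : ℝ≥0∞) (f : ℕ → E) : ℝ≥0∞ :=
  if q = ⊤ then ⨆ k : ℕ, ENNReal.ofReal ((2 : ℝ) ^ ((k : ℝ) * s) * N (f k))
  else (∑' k : ℕ, ENNReal.ofReal ((2 : ℝ) ^ ((k : ℝ) * s) * N (f k)) ^ q.toReal) ^ (1 / q.toReal)

/-- Membership in `Σ^s_q(E)`: finiteness of the norm when `q < ∞`, and
`2^{ks}‖f_k‖_E → 0` when `q = ∞`. -/
def memSigma {E : Type*} (N : E → ℝ) (s : ℝ) (q : ℝ≥0∞) (f : ℕ → E) : Prop :=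
  if q = ⊤ then Tendsto (fun k : ℕ => (2 : ℝ) ^ ((k : ℝ) * s) * N (f k)) atTop (nhds 0)
  else sigmaNorm N s q f < ⊤

/-- Friedrichs smoothing operator `S_n`: truncation of a sequence after index `n`. -/
def smoothS {E : Type*} [Zero E] (n : ℕ) (f : ℕ → E) : ℕ → E :=
  fun k => if k ≤ n then f k else 0

/-- A scale of pseudo-normed vector spaces `(X^σ)_{σ ≥ a}` of type `(q, E)` (Definition 2.7).
The ambient type `X` plays the role of `X^a`; `mem σ` is the submodule `X^σ ⊆ X^a`, and
`nrm σ` is the pseudo-norm `‖·‖_{X^σ}` (given as a total function whose pseudo-norm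
properties are required on `X^σ`). `L` and `R` are the linear maps comparing the scale
with the sequence spaces `Σ^σ_q(E)`. -/
structure PseudoScale {E : Type*} [AddCommGroup E] [Module ℝ E]
    (X : Type*) [AddCommGroup X] [Module ℝ X]
    (a : ℝ) (q : ℝ≥0∞) (NE : E → ℝ) where
  mem : ℝ → Submodule ℝ X
  nrm : ℝ → X → ℝ
  L : X →ₗ[ℝ] (ℕ → E)
  R : (ℕ → E) →ₗ[ℝ] X
  /-- The whole space is `X^a`. -/
  mem_a : ∀ u : X, u ∈ mem a
  /-- `‖·‖_{X^σ}` is a pseudo-norm on `X^σ`. -/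
  nrm_nonneg : ∀ σ, a ≤ σ → ∀ u ∈ mem σ, 0 ≤ nrm σ u
  nrm_neg : ∀ σ, a ≤ σ → ∀ u ∈ mem σ, nrm σ (-u) = nrm σ u
  nrm_add_le : ∀ σ, a ≤ σ → ∀ u ∈ mem σ, ∀ v ∈ mem σ, nrm σ (u + v) ≤ nrm σ u + nrm σ v
  nrm_eq_zero : ∀ σ, a ≤ σ → ∀ u ∈ mem σ, (nrm σ u = 0 ↔ u = 0)
  /-- The family is decreasing: `σ' ≥ σ ≥ a` implies `X^{σ'} ⊆ X^σ` with
  `‖·‖_{X^σ} ≤ ‖·‖_{X^{σ'}}`. -/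
  mem_anti : ∀ σ σ', a ≤ σ → σ ≤ σ' → mem σ' ≤ mem σ
  nrm_mono : ∀ σ σ', a ≤ σ → σ ≤ σ' → ∀ u ∈ mem σ', nrm σ u ≤ nrm σ' u
  /-- `R ∘ L = Id` on `X^a`. -/
  R_L : ∀ u : X, R (L u) = u
  /-- `L(R f) ∈ Σ^σ_1(E)` with `‖L(Rf)‖_{Σ^σ_1} ≤ C(σ) ‖f‖_{Σ^σ_1}` for `f ∈ Σ^σ_1(E)`. -/
  L_R_bound : ∀ σ, a ≤ σ → ∃ C : ℝ, 0 < C ∧ ∀ f : ℕ → E, memSigma NE σ 1 f →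
    memSigma NE σ 1 (L (R f)) ∧
    sigmaNorm NE σ 1 (L (R f)) ≤ ENNReal.ofReal C * sigmaNorm NE σ 1 f
  /-- `L(X^σ) ⊆ Σ^σ_q(E)`. -/
  L_mem : ∀ σ, a ≤ σ → ∀ u ∈ mem σ, memSigma NE σ q (L u)
  /-- `R(Σ^σ_q(E)) ⊆ X^σ`. -/
  R_mem : ∀ σ, a ≤ σ → ∀ f : ℕ → E, memSigma NE σ q f → R f ∈ mem σ
  /-- `‖Lu‖_{Σ^σ_q} ≤ C(σ) ‖u‖_{X^σ}` on `X^σ`. -/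
  L_bound : ∀ σ, a ≤ σ → ∃ C : ℝ, 0 < C ∧ ∀ u ∈ mem σ,
    sigmaNorm NE σ q (L u) ≤ ENNReal.ofReal (C * nrm σ u)
  /-- `‖Rf‖_{X^σ} ≤ C(σ) ‖f‖_{Σ^σ_q}` on `Σ^σ_q(E)`. -/
  R_bound : ∀ σ, a ≤ σ → ∃ C : ℝ, 0 < C ∧ ∀ f : ℕ → E, memSigma NE σ q f →
    nrm σ (R f) ≤ C * (sigmaNorm NE σ q f).toReal


/-- The `ℓ^q` norm of a sequence of extended nonnegative reals. -/
noncomputable def lqNorm (q : ℝ≥0∞) (c : ℕ → ℝ≥0∞) : ℝ≥0∞ :=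
  if q = ⊤ then ⨆ k, c k else (∑' k, c k ^ q.toReal) ^ (1 / q.toReal)

/-- Membership in `ℓ^q` for `q < ∞`, and in `c₀` for `q = ∞`. -/
def MemLq (q : ℝ≥0∞) (c : ℕ → ℝ≥0∞) : Prop :=
  lqNorm q c < ⊤ ∧ (q = ⊤ → Tendsto c atTop (nhds 0))

lemma lqNorm_top (c : ℕ → ℝ≥0∞) : lqNorm ⊤ c = ⨆ k, c k := by simp [lqNorm]

lemma lqNorm_one (c : ℕ → ℝ≥0∞) : lqNorm 1 c = ∑' k, c k := by simp [lqNorm]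

lemma lqNorm_of_ne_top {q : ℝ≥0∞} (hq : q ≠ ⊤) (c : ℕ → ℝ≥0∞) :
    lqNorm q c = (∑' k, c k ^ q.toReal) ^ (1 / q.toReal) := by simp [lqNorm, hq]

lemma ENNReal.one_le_toReal {q : ℝ≥0∞} (hq : 1 ≤ q) (hqt : q ≠ ⊤) : 1 ≤ q.toReal := by
  simpa using ENNReal.toReal_mono hqt hq

lemma lqNorm_mono (q : ℝ≥0∞) {c d : ℕ → ℝ≥0∞} (h : c ≤ d) : lqNorm q c ≤ lqNorm q d := by
  unfold lqNorm
  split_ifs with hq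
  · exact iSup_mono h
  · gcongr with k
    exact h k

lemma lqNorm_const_mul {q : ℝ≥0∞} (hq : 1 ≤ q) (K : ℝ≥0∞) (c : ℕ → ℝ≥0∞) :
    lqNorm q (fun k => K * c k) = K * lqNorm q c := by
  by_cases hqt : q = ⊤
  · subst hqt
    simp only [lqNorm_top, ENNReal.mul_iSup]
  · have hp := ENNReal.one_le_toReal hq hqt
    have hp0 : 0 ≤ q.toReal := by linarith
    simp only [lqNorm_of_ne_top hqt, ENNReal.mul_rpow_of_nonneg _ _ hp0]
    rw [ENNReal.tsum_mul_left, ENNReal.mul_rpow_of_nonneg _ _ (by positivity), ← ENNReal.rpow_mul,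
      mul_one_div_cancel (by linarith), ENNReal.rpow_one]

lemma lqNorm_add_le {q : ℝ≥0∞} (hq : 1 ≤ q) (c d : ℕ → ℝ≥0∞) :
    lqNorm q (c + d) ≤ lqNorm q c + lqNorm q d := by
  by_cases hqt : q = ⊤
  · subst hqt
    simp only [lqNorm_top]
    exact iSup_le fun k => add_le_add (le_iSup c k) (le_iSup d k)
  · have hp := ENNReal.one_le_toReal hq hqt
    have hp0 : 0 < q.toReal := by linarith
    simp only [lqNorm_of_ne_top hqt]
    rw [one_div, ENNReal.rpow_inv_le_iff hp0]
    refine ENNReal.summable.tsum_le_of_sum_le fun s => ?_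
    rw [← ENNReal.rpow_inv_le_iff hp0, ← one_div]
    refine (ENNReal.Lp_add_le s c d hp).trans ?_
    gcongr <;> exact ENNReal.sum_le_tsum s

lemma le_lqNorm {q : ℝ≥0∞} (hq : 1 ≤ q) (c : ℕ → ℝ≥0∞) (k : ℕ) : c k ≤ lqNorm q c := by
  by_cases hqt : q = ⊤
  · subst hqt
    rw [lqNorm_top]
    exact le_iSup c k
  · have hp0 : 0 < q.toReal := by linarith [ENNReal.one_le_toReal hq hqt]
    rw [lqNorm_of_ne_top hqt, one_div, ENNReal.le_rpow_inv_iff hp0]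
    exact ENNReal.le_tsum k

lemma MemLq.mono {q : ℝ≥0∞} {c d : ℕ → ℝ≥0∞} (hd : MemLq q d) (h : c ≤ d) : MemLq q c :=
  ⟨(lqNorm_mono q h).trans_lt hd.1, fun hq =>
    tendsto_of_tendsto_of_tendsto_of_le_of_le tendsto_const_nhds (hd.2 hq)
      (fun _ => zero_le) h⟩

lemma MemLq.add {q : ℝ≥0∞} (hq : 1 ≤ q) {c d : ℕ → ℝ≥0∞} (hc : MemLq q c) (hd : MemLq q d) :
    MemLq q (c + d) :=
  ⟨(lqNorm_add_le hq c d).trans_lt (ENNReal.add_lt_top.2 ⟨hc.1, hd.1⟩), fun h => by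
    simpa [Pi.add_def] using (hc.2 h).add (hd.2 h)⟩

lemma MemLq.const_mul {q : ℝ≥0∞} (hq : 1 ≤ q) {K : ℝ≥0∞} (hK : K ≠ ⊤) {c : ℕ → ℝ≥0∞}
    (hc : MemLq q c) : MemLq q (fun k => K * c k) :=
  ⟨by rw [lqNorm_const_mul hq]; exact ENNReal.mul_lt_top hK.lt_top hc.1, fun h => by
    simpa using ENNReal.Tendsto.const_mul (hc.2 h) (Or.inr hK)⟩

lemma lqNorm_single {q : ℝ≥0∞} (hq : 1 ≤ q) (k : ℕ) (x : ℝ≥0∞) :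
    lqNorm q (Pi.single k x) = x := by
  refine le_antisymm ?_ (by simpa using le_lqNorm hq (Pi.single k x) k)
  by_cases hqt : q = ⊤
  · subst hqt
    rw [lqNorm_top]
    refine iSup_le fun j => ?_
    by_cases hj : j = k
    · subst hj
      simp
    · simp [hj]
  · have hp0 : 0 < q.toReal := by linarith [ENNReal.one_le_toReal hq hqt]
    rw [lqNorm_of_ne_top hqt, one_div, ENNReal.rpow_inv_le_iff hp0,
      tsum_eq_single k fun j hj => by simp [hj, hp0], Pi.single_eq_same]

lemma lqNorm_indicator_Iio_le {q : ℝ≥0∞} (hq : 1 ≤ q) (c : ℕ → ℝ≥0∞) (n : ℕ) :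
    lqNorm q ((Set.Iio n).indicator c) ≤ ∑ k ∈ Finset.range n, c k := by
  induction n with
  | zero => simpa [Pi.zero_def] using (lqNorm_single hq 0 0).le
  | succ n ih =>
    have h : (Set.Iio (n + 1)).indicator c = (Set.Iio n).indicator c + Pi.single n (c n) := by
      funext k
      rcases lt_trichotomy k n with hk | rfl | hk
      · simp [hk, hk.ne, hk.trans n.lt_succ_self]
      · simp
      · simp [hk.ne', hk.not_gt, Nat.not_lt.2 (Nat.succ_le_of_lt hk)]
    rw [h, Finset.sum_range_succ]
    exact (lqNorm_add_le hq _ _).trans (add_le_add ih (lqNorm_single hq n (c n)).le)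

lemma memLq_indicator_Iio {q : ℝ≥0∞} (hq : 1 ≤ q) {c : ℕ → ℝ≥0∞} (hc : ∀ k, c k ≠ ⊤) (n : ℕ) :
    MemLq q ((Set.Iio n).indicator c) := by
  refine ⟨(lqNorm_indicator_Iio_le hq c n).trans_lt
    (ENNReal.sum_lt_top.2 fun k _ => (hc k).lt_top), fun _ => ?_⟩
  refine tendsto_const_nhds.congr' ?_
  filter_upwards [eventually_ge_atTop n] with k hk
  simp [hk]

lemma indicator_Iio_add_indicator_Ici (c : ℕ → ℝ≥0∞) (n : ℕ) :
    (Set.Iio n).indicator c + (Set.Ici n).indicator c = c := by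
  rw [← Set.compl_Iio, Set.indicator_self_add_compl]

lemma MemLq.tendsto_indicator_Ici {q : ℝ≥0∞} (hq : 1 ≤ q) {c : ℕ → ℝ≥0∞} (hc : MemLq q c) :
    Tendsto (fun n => lqNorm q ((Set.Ici n).indicator c)) atTop (nhds 0) := by
  by_cases hqt : q = ⊤
  · have h0 := hc.2 hqt
    subst hqt
    rw [ENNReal.tendsto_atTop_zero] at h0 ⊢
    intro ε hε
    obtain ⟨N, hN⟩ := h0 ε hε
    refine ⟨N, fun n hn => ?_⟩
    rw [lqNorm_top]
    refine iSup_le fun k => ?_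
    by_cases hk : n ≤ k
    · simpa [hk] using hN k (hn.trans hk)
    · simp [hk]
  · have hp0 : 0 < q.toReal := by linarith [ENNReal.one_le_toReal hq hqt]
    have hfin : ∑' k, c k ^ q.toReal ≠ ⊤ := by
      have := hc.1
      rw [lqNorm_of_ne_top hqt, one_div] at this
      intro h
      rw [h, ENNReal.top_rpow_of_pos (by positivity)] at this
      exact lt_irrefl _ this
    have h1 := ((ENNReal.continuous_rpow_const (y := 1 / q.toReal)).tendsto 0).comp
      (ENNReal.tendsto_sum_nat_add _ hfin)
    rw [ENNReal.zero_rpow_of_pos (by positivity)] at h1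
    refine h1.congr fun n => ?_
    rw [lqNorm_of_ne_top hqt, Function.comp,
      ← ENNReal.summable.sum_add_tsum_nat_add' (k := n)
        (f := fun k => (Set.Ici n).indicator c k ^ q.toReal), Finset.sum_eq_zero, zero_add]
    · simp
    · intro k hk
      have : ¬ n ≤ k := by simpa using hk
      simp [this, hp0]

/-- Schur's test on `ℓ^q`. -/
lemma lqNorm_kernel_le {q : ℝ≥0∞} (hq : 1 ≤ q) {a : ℕ → ℕ → ℝ≥0∞} {A : ℝ≥0∞}
    (hrow : ∀ k, ∑' j, a k j ≤ A) (hcol : ∀ j, ∑' k, a k j ≤ A) (c : ℕ → ℝ≥0∞) :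
    lqNorm q (fun k => ∑' j, a k j * c j) ≤ A * lqNorm q c := by
  by_cases hqt : q = ⊤
  · subst hqt
    simp only [lqNorm_top]
    refine iSup_le fun k => ?_
    calc ∑' j, a k j * c j ≤ ∑' j, a k j * ⨆ i, c i := by gcongr with j; exact le_iSup c j
      _ = (∑' j, a k j) * ⨆ i, c i := ENNReal.tsum_mul_right
      _ ≤ A * ⨆ i, c i := by gcongr; exact hrow k
  · have hp := ENNReal.one_le_toReal hq hqt
    set p := q.toReal with hpdef
    have hp0 : 0 < p := by linarith
    have hexp : 0 ≤ 1 - p⁻¹ := by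
      have := inv_le_one_of_one_le₀ hp
      linarith
    have hpt : ∀ k, (∑' j, a k j * c j) ^ p ≤ A ^ (p - 1) * ∑' j, a k j * c j ^ p := by
      intro k
      rw [← ENNReal.le_rpow_inv_iff hp0]
      refine ENNReal.summable.tsum_le_of_sum_le fun s => ?_
      refine (ENNReal.inner_le_weight_mul_Lp_of_nonneg s hp (a k) c).trans ?_
      rw [ENNReal.mul_rpow_of_nonneg _ _ (by positivity), ← ENNReal.rpow_mul,
        show (p - 1) * p⁻¹ = 1 - p⁻¹ by field_simp]
      gcongr
      · exact (ENNReal.sum_le_tsum s).trans (hrow k)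
      · exact ENNReal.sum_le_tsum s
    rw [lqNorm_of_ne_top hqt, lqNorm_of_ne_top hqt, one_div, ENNReal.rpow_inv_le_iff hp0,
      ENNReal.mul_rpow_of_nonneg _ _ hp0.le, ← ENNReal.rpow_mul, inv_mul_cancel₀ hp0.ne',
      ENNReal.rpow_one]
    calc ∑' k, (∑' j, a k j * c j) ^ p ≤ ∑' k, A ^ (p - 1) * ∑' j, a k j * c j ^ p :=
          ENNReal.tsum_le_tsum hpt
      _ = A ^ (p - 1) * ∑' j, (∑' k, a k j) * c j ^ p := by
          rw [ENNReal.tsum_mul_left, ENNReal.tsum_comm]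
          simp only [ENNReal.tsum_mul_right]
      _ ≤ A ^ (p - 1) * ∑' j, A * c j ^ p := by gcongr with j; exact hcol j
      _ = A ^ p * ∑' j, c j ^ p := by
          rw [ENNReal.tsum_mul_left, ← mul_assoc]
          congr 1
          nth_rewrite 2 [← ENNReal.rpow_one A]
          rw [← ENNReal.rpow_add_of_nonneg _ _ (by linarith) zero_le_one, sub_add_cancel]

lemma MemLq.kernel {q : ℝ≥0∞} (hq : 1 ≤ q) {a : ℕ → ℕ → ℝ≥0∞} {A : ℝ≥0∞} (hA : A ≠ ⊤)
    (hrow : ∀ k, ∑' j, a k j ≤ A) (hcol : ∀ j, ∑' k, a k j ≤ A) {c : ℕ → ℝ≥0∞}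
    (hc : MemLq q c) : MemLq q (fun k => ∑' j, a k j * c j) := by
  refine ⟨(lqNorm_kernel_le hq hrow hcol c).trans_lt (ENNReal.mul_lt_top hA.lt_top hc.1),
    fun hqt => ?_⟩
  have htail := ENNReal.Tendsto.const_mul (hc.tendsto_indicator_Ici hq) (Or.inr hA)
  rw [mul_zero, ENNReal.tendsto_atTop_zero] at htail
  rw [ENNReal.tendsto_atTop_zero]
  intro ε hε
  obtain ⟨n, hn⟩ := htail (ε / 2) (ENNReal.half_pos hε.ne')
  have hhead : Tendsto (fun k => ∑ j ∈ Finset.range n, a k j * c j) atTop (nhds 0) := by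
    rw [show (0 : ℝ≥0∞) = ∑ j ∈ Finset.range n, 0 * c j by simp]
    refine tendsto_finsetSum _ fun j _ => ?_
    exact ENNReal.Tendsto.mul_const
      (ENNReal.tendsto_atTop_zero_of_tsum_ne_top (ne_top_of_le_ne_top hA (hcol j)))
      (Or.inr ((le_lqNorm hq c j).trans_lt hc.1).ne)
  rw [ENNReal.tendsto_atTop_zero] at hhead
  obtain ⟨M, hM⟩ := hhead (ε / 2) (ENNReal.half_pos hε.ne')
  refine ⟨M, fun k hk => ?_⟩
  have h1 : ∑' j, a k j * (Set.Iio n).indicator c j = ∑ j ∈ Finset.range n, a k j * c j := by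
    rw [tsum_eq_sum (s := Finset.range n) fun j hj => by
      have : ¬ j < n := by simpa using hj
      simp [this]]
    refine Finset.sum_congr rfl fun j hj => ?_
    rw [Set.indicator_of_mem (Set.mem_Iio.2 (Finset.mem_range.1 hj))]
  have h2 : ∑' j, a k j * (Set.Ici n).indicator c j ≤ ε / 2 :=
    ((le_lqNorm hq (fun k => ∑' j, a k j * (Set.Ici n).indicator c j) k).trans
      (lqNorm_kernel_le hq hrow hcol _)).trans (hn n le_rfl)
  calc ∑' j, a k j * c j
      = ∑' j, (a k j * (Set.Iio n).indicator c j + a k j * (Set.Ici n).indicator c j) := by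
        refine tsum_congr fun j => ?_
        rw [← mul_add, ← Pi.add_apply, indicator_Iio_add_indicator_Ici]
    _ ≤ ε / 2 + ε / 2 := by
        rw [ENNReal.tsum_add, h1]
        exact add_le_add (hM k hk) h2
    _ = ε := ENNReal.add_halves ε

/-- Convolution of a sequence with the two-sided geometric sequence `ρ ^ |m|`. -/
noncomputable def geomConv (ρ : ℝ≥0∞) (c : ℕ → ℝ≥0∞) (k : ℕ) : ℝ≥0∞ :=
  ∑' j : ℕ, ρ ^ ((k : ℤ) - j).natAbs * c j

lemma tsum_int_pow_natAbs_ne_top {ρ : ℝ≥0∞} (hρ : ρ < 1) : ∑' m : ℤ, ρ ^ m.natAbs ≠ ⊤ := by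
  have hg : ∑' m : ℕ, ρ ^ m ≠ ⊤ := by
    rw [ENNReal.tsum_geometric, ENNReal.inv_ne_top]
    exact (tsub_pos_of_lt hρ).ne'
  have h := (ENNReal.summable (f := fun m : ℕ => ρ ^ (m : ℤ).natAbs)).hasSum.of_nat_of_neg_add_one
    (f := fun m : ℤ => ρ ^ m.natAbs) (ENNReal.summable.hasSum)
  rw [h.tsum_eq]
  refine ENNReal.add_ne_top.2 ⟨by simpa using hg, ?_⟩
  refine ne_top_of_le_ne_top hg
    (ENNReal.tsum_comp_le_tsum_of_injective Nat.succ_injective _ |>.trans' ?_)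
  refine ENNReal.tsum_le_tsum fun m => le_of_eq ?_
  congr 1

lemma tsum_geom_row_le (ρ : ℝ≥0∞) (k : ℕ) :
    ∑' j : ℕ, ρ ^ ((k : ℤ) - j).natAbs ≤ ∑' m : ℤ, ρ ^ m.natAbs :=
  ENNReal.tsum_comp_le_tsum_of_injective (f := fun j : ℕ => (k : ℤ) - j)
    (fun i j h => by simpa using h) fun m : ℤ => ρ ^ m.natAbs

lemma tsum_geom_col_le (ρ : ℝ≥0∞) (j : ℕ) :
    ∑' k : ℕ, ρ ^ ((k : ℤ) - j).natAbs ≤ ∑' m : ℤ, ρ ^ m.natAbs :=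
  ENNReal.tsum_comp_le_tsum_of_injective (f := fun k : ℕ => (k : ℤ) - j)
    (fun i j h => by simpa using h) fun m : ℤ => ρ ^ m.natAbs

lemma lqNorm_geomConv_le {q : ℝ≥0∞} (hq : 1 ≤ q) (ρ : ℝ≥0∞) (c : ℕ → ℝ≥0∞) :
    lqNorm q (geomConv ρ c) ≤ (∑' m : ℤ, ρ ^ m.natAbs) * lqNorm q c :=
  lqNorm_kernel_le hq (tsum_geom_row_le ρ) (tsum_geom_col_le ρ) c

lemma MemLq.geomConv {q ρ : ℝ≥0∞} (hq : 1 ≤ q) (hρ : ρ < 1) {c : ℕ → ℝ≥0∞} (hc : MemLq q c) :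
    MemLq q (geomConv ρ c) :=
  hc.kernel hq (tsum_int_pow_natAbs_ne_top hρ) (tsum_geom_row_le ρ) (tsum_geom_col_le ρ)

lemma geomConv_mono (ρ : ℝ≥0∞) {c d : ℕ → ℝ≥0∞} (h : c ≤ d) : geomConv ρ c ≤ geomConv ρ d :=
  fun _ => ENNReal.tsum_le_tsum fun j => mul_le_mul_right (h j) _

lemma geomConv_add (ρ : ℝ≥0∞) (c d : ℕ → ℝ≥0∞) :
    geomConv ρ (c + d) = geomConv ρ c + geomConv ρ d := by
  funext k
  simp only [geomConv, Pi.add_apply, mul_add, ENNReal.tsum_add]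

/-- The weighted sequence `2^{ks} ‖f_k‖` whose `ℓ^q` norm is the `Σ^s_q` norm of `f`. -/
noncomputable def weightedSeq {E : Type*} (N : E → ℝ) (s : ℝ) (f : ℕ → E) (k : ℕ) : ℝ≥0∞ :=
  ENNReal.ofReal ((2 : ℝ) ^ ((k : ℝ) * s) * N (f k))

lemma sigmaNorm_eq_lqNorm {E : Type*} (N : E → ℝ) (s : ℝ) (q : ℝ≥0∞) (f : ℕ → E) :
    sigmaNorm N s q f = lqNorm q (weightedSeq N s f) := rfl

lemma weightedSeq_ne_top {E : Type*} (N : E → ℝ) (s : ℝ) (f : ℕ → E) (k : ℕ) :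
    weightedSeq N s f k ≠ ⊤ := ENNReal.ofReal_ne_top

lemma weightedSeq_rescale {E : Type*} (N : E → ℝ) (s τ : ℝ) (f : ℕ → E) (k : ℕ) :
    ENNReal.ofReal ((2 : ℝ) ^ ((k : ℝ) * (s - τ))) * weightedSeq N τ f k
      = weightedSeq N s f k := by
  rw [weightedSeq, weightedSeq, ← ENNReal.ofReal_mul (by positivity), ← mul_assoc,
    ← Real.rpow_add two_pos]
  ring_nf

lemma weightedSeq_mul_le_geom {E : Type*} {N : E → ℝ} {s τ β : ℝ} (f : ℕ → E) {k j : ℕ}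
    (h : (k : ℝ) * (s - τ) + j * τ ≤ -β * |(k : ℝ) - j| + j * s) :
    ENNReal.ofReal ((2 : ℝ) ^ ((k : ℝ) * (s - τ))) * weightedSeq N τ f j
      ≤ ENNReal.ofReal ((2 : ℝ) ^ (-β)) ^ ((k : ℤ) - j).natAbs * weightedSeq N s f j := by
  have hcast : (((k : ℤ) - j).natAbs : ℝ) = |(k : ℝ) - j| := by
    rw [Nat.cast_natAbs]
    push_cast
    rfl
  have hp : 0 ≤ (2 : ℝ) ^ (-β) := by positivity
  rw [weightedSeq, weightedSeq, ← ENNReal.ofReal_pow hp, ← Real.rpow_mul_natCast two_pos.le, hcast,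
    ← ENNReal.ofReal_mul (by positivity), ← ENNReal.ofReal_mul (by positivity), ← mul_assoc,
    ← mul_assoc,
    ← Real.rpow_add two_pos, ← Real.rpow_add two_pos, ENNReal.ofReal_mul (by positivity),
    ENNReal.ofReal_mul (by positivity)]
  gcongr
  norm_num

lemma memLq_one_iff {c : ℕ → ℝ≥0∞} : MemLq 1 c ↔ lqNorm 1 c < ⊤ := by simp [MemLq]

lemma sigmaNorm_one_le_geomConv {E : Type*} {N : E → ℝ} {s s₀ β : ℝ} (hβ : β ≤ s - s₀) (f : ℕ → E) :
    sigmaNorm N s₀ 1 f ≤ geomConv (ENNReal.ofReal ((2 : ℝ) ^ (-β))) (weightedSeq N s f) 0 := by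
  rw [sigmaNorm_eq_lqNorm, lqNorm_one]
  refine ENNReal.tsum_le_tsum fun j => ?_
  have hj : (0 : ℝ) ≤ j := j.cast_nonneg
  have h := weightedSeq_mul_le_geom (N := N) (s := s) (τ := s₀) (β := β) f (k := 0) (j := j) (by
    rw [abs_of_nonpos (by simp)]
    push_cast
    nlinarith)
  simpa using h

section

variable {E : Type*} [AddCommGroup E] [Module ℝ E] {N : E → ℝ}

lemma memSigma_iff_memLq (hN : IsPseudoNorm N) (s : ℝ) (q : ℝ≥0∞) (f : ℕ → E) :
    memSigma N s q f ↔ MemLq q (weightedSeq N s f) := by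
  unfold memSigma MemLq
  rw [sigmaNorm_eq_lqNorm]
  split_ifs with hq
  · subst hq
    have hnn : ∀ k : ℕ, 0 ≤ (2 : ℝ) ^ ((k : ℝ) * s) * N (f k) := fun k =>
      mul_nonneg (by positivity) (hN.nonneg _)
    refine ⟨fun h => ⟨?_, fun _ => ?_⟩, fun h => ?_⟩
    · obtain ⟨B, hB⟩ := h.bddAbove_range
      rw [lqNorm_top]
      refine (iSup_le fun k => ?_).trans_lt (ENNReal.ofReal_lt_top (r := B))
      exact ENNReal.ofReal_le_ofReal (hB ⟨k, rfl⟩)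
    · have := ENNReal.tendsto_ofReal h
      rwa [ENNReal.ofReal_zero] at this
    · have := (ENNReal.tendsto_toReal ENNReal.zero_ne_top).comp (h.2 rfl)
      simpa [weightedSeq, Function.comp_def, ENNReal.toReal_ofReal, hnn] using this
  · simp [hq]

lemma weightedSeq_add_le (hN : IsPseudoNorm N) (s : ℝ) (f g : ℕ → E) :
    weightedSeq N s (f + g) ≤ weightedSeq N s f + weightedSeq N s g := fun k => by
  have hf := hN.nonneg (f k)
  have hg := hN.nonneg (g k)
  rw [Pi.add_apply, weightedSeq, weightedSeq, weightedSeq,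
    ← ENNReal.ofReal_add (by positivity) (by positivity), ← mul_add]
  gcongr
  exact hN.add_le _ _

lemma weightedSeq_neg (hN : IsPseudoNorm N) (s : ℝ) (f : ℕ → E) :
    weightedSeq N s (-f) = weightedSeq N s f := by
  funext k
  simp [weightedSeq, hN.neg]

lemma weightedSeq_sub_le (hN : IsPseudoNorm N) (s : ℝ) (f g : ℕ → E) :
    weightedSeq N s (f - g) ≤ weightedSeq N s f + weightedSeq N s g := by
  rw [sub_eq_add_neg, ← weightedSeq_neg hN s g]
  exact weightedSeq_add_le hN s f (-g)

lemma weightedSeq_smoothS (hN : IsPseudoNorm N) (s : ℝ) (n : ℕ) (f : ℕ → E) :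
    weightedSeq N s (smoothS n f) = (Set.Iio (n + 1)).indicator (weightedSeq N s f) := by
  funext k
  by_cases hk : k ≤ n
  · simp [weightedSeq, smoothS, hk, Nat.lt_succ_of_le hk]
  · simp [weightedSeq, smoothS, hk, (hN.eq_zero_iff 0).2 rfl]

lemma weightedSeq_sub_smoothS (hN : IsPseudoNorm N) (s : ℝ) (n : ℕ) (f : ℕ → E) :
    weightedSeq N s (f - smoothS n f) = (Set.Ici (n + 1)).indicator (weightedSeq N s f) := by
  funext k
  by_cases hk : k ≤ n
  · simp [weightedSeq, smoothS, hk, (hN.eq_zero_iff 0).2 rfl]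
  · simp [weightedSeq, smoothS, hk, Nat.succ_le_of_lt (not_le.1 hk)]

lemma memSigma_smoothS (hN : IsPseudoNorm N) {q : ℝ≥0∞} (hq : 1 ≤ q) (s : ℝ) (n : ℕ)
    (f : ℕ → E) : memSigma N s q (smoothS n f) := by
  rw [memSigma_iff_memLq hN, weightedSeq_smoothS hN]
  exact memLq_indicator_Iio hq (weightedSeq_ne_top N s f) _

/-- High-frequency estimate for the Friedrichs smoothing operators. -/
lemma sigmaNorm_sub_smoothS_le (hN : IsPseudoNorm N) {s s₀ β : ℝ} (hβ : β ≤ s - s₀) (f : ℕ → E)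
    (k : ℕ) :
    ENNReal.ofReal ((2 : ℝ) ^ ((k : ℝ) * (s - s₀))) * sigmaNorm N s₀ 1 (f - smoothS k f)
      ≤ geomConv (ENNReal.ofReal ((2 : ℝ) ^ (-β))) (weightedSeq N s f) k := by
  rw [sigmaNorm_eq_lqNorm, weightedSeq_sub_smoothS hN, lqNorm_one, ← ENNReal.tsum_mul_left]
  refine ENNReal.tsum_le_tsum fun j => ?_
  by_cases hj : k + 1 ≤ j
  · rw [Set.indicator_of_mem (Set.mem_Ici.2 hj)]
    apply weightedSeq_mul_le_geom
    have hkj : (k : ℝ) ≤ j := by exact_mod_cast (Nat.le_succ k).trans hj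
    rw [abs_of_nonpos (by linarith)]
    nlinarith
  · simp [hj]

/-- Low-frequency estimate for the Friedrichs smoothing operators. -/
lemma sigmaNorm_smoothS_le (hN : IsPseudoNorm N) {s s₁ β : ℝ} (hβ : β ≤ s₁ - s) (f : ℕ → E)
    (k : ℕ) :
    ENNReal.ofReal ((2 : ℝ) ^ ((k : ℝ) * (s - s₁))) * sigmaNorm N s₁ 1 (smoothS k f)
      ≤ geomConv (ENNReal.ofReal ((2 : ℝ) ^ (-β))) (weightedSeq N s f) k := by
  rw [sigmaNorm_eq_lqNorm, weightedSeq_smoothS hN, lqNorm_one, ← ENNReal.tsum_mul_left]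
  refine ENNReal.tsum_le_tsum fun j => ?_
  by_cases hj : j < k + 1
  · rw [Set.indicator_of_mem (Set.mem_Iio.2 hj)]
    apply weightedSeq_mul_le_geom
    have hkj : (j : ℝ) ≤ k := by exact_mod_cast Nat.lt_succ_iff.1 hj
    rw [abs_of_nonneg (by linarith)]
    nlinarith
  · simp [hj]

/-- Truncations of elements near `v` stay in any ball containing `v`. -/
lemma PseudoScale.exists_smoothS_mem_ball {X : Type*} [AddCommGroup X] [Module ℝ X] {a : ℝ}
    {q : ℝ≥0∞} (S : PseudoScale X a q N) (hN : IsPseudoNorm N) (hq : 1 ≤ q) {s r : ℝ}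
    (hs : a ≤ s) {v : X} (hv : v ∈ S.mem s) (hvr : S.nrm s v < r) :
    ∃ n₀ : ℕ, ∃ δ : ℝ, 0 < δ ∧ ∀ w ∈ S.mem s, S.nrm s (w - v) < δ → ∀ n, n₀ ≤ n →
      S.R (smoothS n (S.L w)) ∈ S.mem s ∧ S.nrm s (S.R (smoothS n (S.L w))) < r := by
  obtain ⟨CR, hCR, hR⟩ := S.R_bound s hs
  obtain ⟨CL, hCL, hL⟩ := S.L_bound s hs
  have hmem : ∀ n f, S.R (smoothS n f) ∈ S.mem s := fun n f =>
    S.R_mem s hs _ (memSigma_smoothS hN hq s n f)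
  have hLv := (memSigma_iff_memLq hN s q _).1 (S.L_mem s hs v hv)
  set η : ℝ := (r - S.nrm s v) / 2 with hη
  have hη0 : 0 < η := by linarith
  have htail : Tendsto (fun n : ℕ => CR * (sigmaNorm N s q (S.L v - smoothS n (S.L v))).toReal)
      atTop (nhds 0) := by
    have h := (ENNReal.tendsto_toReal ENNReal.zero_ne_top).comp
      ((hLv.tendsto_indicator_Ici hq).comp (tendsto_add_atTop_nat 1))
    simpa [Function.comp_def, sigmaNorm_eq_lqNorm, weightedSeq_sub_smoothS hN] using
      h.const_mul CR
  obtain ⟨n₀, hn₀⟩ := eventually_atTop.1 (htail.eventually_lt_const hη0)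
  refine ⟨n₀, η / (CR * CL), by positivity, fun w hw hwv n hn => ⟨hmem _ _, ?_⟩⟩
  have h1 : S.nrm s (S.R (smoothS n (S.L v)) - v) < η := by
    have hsub : memSigma N s q (S.L v - smoothS n (S.L v)) := by
      rw [memSigma_iff_memLq hN, weightedSeq_sub_smoothS hN]
      exact hLv.mono (Set.indicator_le_self _ _)
    have heq : S.R (smoothS n (S.L v)) - v = -S.R (S.L v - smoothS n (S.L v)) := by
      rw [map_sub, S.R_L]
      abel
    rw [heq, S.nrm_neg s hs _ (S.R_mem s hs _ hsub)]
    exact (hR _ hsub).trans_lt (hn₀ n hn)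
  have h2 : S.nrm s (S.R (smoothS n (S.L (w - v)))) < η := by
    refine (hR _ (memSigma_smoothS hN hq s n _)).trans_lt ?_
    have hwv' := (S.mem s).sub_mem hw hv
    have hle : (sigmaNorm N s q (smoothS n (S.L (w - v)))).toReal ≤ CL * S.nrm s (w - v) := by
      refine ENNReal.toReal_le_of_le_ofReal
        (mul_nonneg hCL.le (S.nrm_nonneg s hs _ hwv')) (le_trans ?_ (hL _ hwv'))
      rw [sigmaNorm_eq_lqNorm, weightedSeq_smoothS hN]
      exact lqNorm_mono q (Set.indicator_le_self _ _)
    rw [lt_div_iff₀ (by positivity)] at hwv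
    nlinarith
  have heq : S.R (smoothS n (S.L w))
      = S.R (smoothS n (S.L (w - v))) + ((S.R (smoothS n (S.L v)) - v) + v) := by
    rw [sub_add_cancel, ← map_add]
    congr 1
    funext k
    by_cases hk : k ≤ n <;> simp [smoothS, hk]
  have hd := (S.mem s).sub_mem (hmem n (S.L v)) hv
  have h3 := S.nrm_add_le s hs _ (hmem n (S.L (w - v))) _ ((S.mem s).add_mem hd hv)
  have h4 := S.nrm_add_le s hs _ hd _ hv
  rw [heq]
  linarith

/-- Low and high frequencies are balanced by truncating at the frequency being estimated. -/
lemma PseudoScale.exists_weightedSeq_le_geomConv {X : Type*} [AddCommGroup X] [Module ℝ X]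
    {a : ℝ} {q : ℝ≥0∞} (S : PseudoScale X a q N) (hN : IsPseudoNorm N) (hq : 1 ≤ q)
    {F : Type*} [AddCommGroup F] [Module ℝ F] {NF : F → ℝ} (hNF : IsPseudoNorm NF)
    {s₀ s s₁ β : ℝ} (ha : a ≤ s₀) (hs₀ : s₀ ≤ s) (hs₁ : s ≤ s₁) (hβ : 0 < β)
    (hβ₀ : β ≤ s - s₀) (hβ₁ : β ≤ s₁ - s) (C₀ C₁ : ℝ) :
    ∃ K : ℝ≥0∞, K ≠ ⊤ ∧ ∀ v ∈ S.mem s, ∀ (n : ℕ) (g h : ℕ → F),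
      sigmaNorm NF s₀ ⊤ (g - h) ≤ ENNReal.ofReal C₀ *
        sigmaNorm N s₀ 1 (S.L v - S.L (S.R (smoothS n (S.L v)))) →
      sigmaNorm NF s₁ ⊤ h ≤ ENNReal.ofReal C₁ *
        sigmaNorm N s₁ 1 (S.L (S.R (smoothS n (S.L v)))) →
      weightedSeq NF s g n ≤
        K * geomConv (ENNReal.ofReal ((2 : ℝ) ^ (-β))) (weightedSeq N s (S.L v)) n := by
  obtain ⟨D₀, hD₀, hLR₀⟩ := S.L_R_bound s₀ ha
  obtain ⟨D₁, hD₁, hLR₁⟩ := S.L_R_bound s₁ (ha.trans (hs₀.trans hs₁))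
  set ρ : ℝ≥0∞ := ENNReal.ofReal ((2 : ℝ) ^ (-β)) with hρ
  have hρ1 : ρ < 1 := by
    rw [hρ, ENNReal.ofReal_lt_one]
    exact Real.rpow_lt_one_of_one_lt_of_neg one_lt_two (by linarith)
  refine ⟨ENNReal.ofReal C₀ * ENNReal.ofReal D₀ + ENNReal.ofReal C₁ * ENNReal.ofReal D₁,
    by finiteness, fun v hv n g h hlow htame => ?_⟩
  have hLv := (memSigma_iff_memLq hN s q _).1 (S.L_mem s (ha.trans hs₀) v hv)
  set f := S.L v with hf
  have hmem₀ : memSigma N s₀ 1 (f - smoothS n f) := by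
    rw [memSigma_iff_memLq hN, weightedSeq_sub_smoothS hN]
    refine (memLq_one_iff.2 ?_).mono (Set.indicator_le_self _ _)
    exact (sigmaNorm_one_le_geomConv hβ₀ f).trans_lt
      ((le_lqNorm hq _ 0).trans_lt (hLv.geomConv hq hρ1).1)
  have hsub : f - S.L (S.R (smoothS n f)) = S.L (S.R (f - smoothS n f)) := by
    rw [map_sub, map_sub, hf, S.R_L]
  have h0 : weightedSeq NF s (g - h) n ≤ ENNReal.ofReal C₀ * ENNReal.ofReal D₀ *
      geomConv ρ (weightedSeq N s f) n := by
    have h := le_lqNorm le_top (weightedSeq NF s₀ (g - h)) n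
    rw [← sigmaNorm_eq_lqNorm] at h
    replace h := h.trans hlow
    rw [hsub] at h
    calc weightedSeq NF s (g - _) n
        = ENNReal.ofReal ((2 : ℝ) ^ ((n : ℝ) * (s - s₀))) * weightedSeq NF s₀ (g - _) n :=
          (weightedSeq_rescale NF s s₀ _ n).symm
      _ ≤ ENNReal.ofReal ((2 : ℝ) ^ ((n : ℝ) * (s - s₀))) * (ENNReal.ofReal C₀ *
            (ENNReal.ofReal D₀ * sigmaNorm N s₀ 1 (f - smoothS n f))) := by
          gcongr
          exact h.trans (by gcongr; exact (hLR₀ _ hmem₀).2)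
      _ = ENNReal.ofReal C₀ * ENNReal.ofReal D₀ *
            (ENNReal.ofReal ((2 : ℝ) ^ ((n : ℝ) * (s - s₀))) *
              sigmaNorm N s₀ 1 (f - smoothS n f)) := by ring
      _ ≤ _ := by
          gcongr
          exact sigmaNorm_sub_smoothS_le hN hβ₀ f n
  have h1 : weightedSeq NF s h n ≤ ENNReal.ofReal C₁ * ENNReal.ofReal D₁ *
      geomConv ρ (weightedSeq N s f) n := by
    have h' := le_lqNorm le_top (weightedSeq NF s₁ h) n
    rw [← sigmaNorm_eq_lqNorm] at h'
    replace h' := h'.trans htame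
    calc weightedSeq NF s h n
        = ENNReal.ofReal ((2 : ℝ) ^ ((n : ℝ) * (s - s₁))) * weightedSeq NF s₁ h n :=
          (weightedSeq_rescale NF s s₁ _ n).symm
      _ ≤ ENNReal.ofReal ((2 : ℝ) ^ ((n : ℝ) * (s - s₁))) * (ENNReal.ofReal C₁ *
            (ENNReal.ofReal D₁ * sigmaNorm N s₁ 1 (smoothS n f))) := by
          gcongr
          exact h'.trans (by gcongr; exact (hLR₁ _ (memSigma_smoothS hN le_rfl s₁ n f)).2)
      _ = ENNReal.ofReal C₁ * ENNReal.ofReal D₁ *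
            (ENNReal.ofReal ((2 : ℝ) ^ ((n : ℝ) * (s - s₁))) *
              sigmaNorm N s₁ 1 (smoothS n f)) := by ring
      _ ≤ _ := by
          gcongr
          exact sigmaNorm_smoothS_le hN hβ₁ f n
  have h2 := weightedSeq_add_le hNF s (g - h) h n
  rw [sub_add_cancel] at h2
  rw [add_mul]
  exact h2.trans (add_le_add h0 h1)

end

/-- Theorem 2.10 (main nonlinear interpolation theorem): let `(X^σ)` and `(Y^σ)` be scales
of pseudo-normed vector spaces of type `(q,E)` and `(q,F)`, let `a ≤ s₀ < s < s₁`, `r > 0`,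
and let `Φ : B_s(0,r) ⊆ X^s → Y^{s₀}` satisfy the contraction estimate
`‖Φ(v)-Φ(w)‖_{Y^{s₀}_∞} ≤ C₀ ‖v-w‖_{X^{s₀}_1}` on the ball and the tame estimate
`‖Φ(v)‖_{Y^{s₁}_∞} ≤ C₁ ‖v‖_{X^{s₁}_1}` for `v ∈ X^∞_1 ∩ B_s(0,r)`. Then `Φ(v) ∈ Y^s`
for every `v ∈ B_s(0,r)`, and `Φ : B_s(0,r) → Y^s` is continuous. -/
theorem nonlinear_interpolation_scales
    {E F : Type*} [AddCommGroup E] [Module ℝ E] [AddCommGroup F] [Module ℝ F]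
    {X Y : Type*} [AddCommGroup X] [Module ℝ X] [AddCommGroup Y] [Module ℝ Y]
    (NE : E → ℝ) (NF : F → ℝ) (hNE : IsPseudoNorm NE) (hNF : IsPseudoNorm NF)
    (a : ℝ) (q : ℝ≥0∞) (hq : 1 ≤ q)
    (SX : PseudoScale X a q NE) (SY : PseudoScale Y a q NF)
    (s₀ s s₁ r : ℝ) (ha : a ≤ s₀) (hs₀ : s₀ < s) (hs₁ : s < s₁) (hr : 0 < r)
    (Φ : X → Y)
    -- Φ maps the ball B_s(0,r) ⊆ X^s into Y^{s₀}
    (hΦmem : ∀ v, v ∈ SX.mem s → SX.nrm s v < r → Φ v ∈ SY.mem s₀)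
    -- contraction: ‖Φ(v) - Φ(w)‖_{Y^{s₀}_∞} ≤ C₀ ‖v - w‖_{X^{s₀}_1}
    (C₀ : ℝ) (hC₀ : 0 < C₀)
    (hlip : ∀ v w, v ∈ SX.mem s → SX.nrm s v < r → w ∈ SX.mem s → SX.nrm s w < r →
      sigmaNorm NF s₀ ⊤ (SY.L (Φ v) - SY.L (Φ w))
        ≤ ENNReal.ofReal C₀ * sigmaNorm NE s₀ 1 (SX.L v - SX.L w))
    -- tame: ‖Φ(v)‖_{Y^{s₁}_∞} ≤ C₁ ‖v‖_{X^{s₁}_1} for v ∈ X^∞_1 ∩ B_s(0,r)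
    (C₁ : ℝ) (hC₁ : 0 < C₁)
    (htame : ∀ v, (∃ g : ℕ → E, (∀ σ : ℝ, memSigma NE σ 1 g) ∧ v = SX.R g) →
      v ∈ SX.mem s → SX.nrm s v < r →
      sigmaNorm NF s₁ ⊤ (SY.L (Φ v)) ≤ ENNReal.ofReal C₁ * sigmaNorm NE s₁ 1 (SX.L v)) :
    -- interpolation: Φ(v) ∈ Y^s for all v ∈ B_s(0,r)
    (∀ v, v ∈ SX.mem s → SX.nrm s v < r → Φ v ∈ SY.mem s) ∧
    -- continuity of Φ : B_s(0,r) → Y^s for the induced distances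
    (∀ v, v ∈ SX.mem s → SX.nrm s v < r →
      ∀ ε : ℝ, 0 < ε → ∃ δ : ℝ, 0 < δ ∧
        ∀ w, w ∈ SX.mem s → SX.nrm s w < r → SX.nrm s (w - v) < δ →
          SY.nrm s (Φ w - Φ v) < ε) := by
  have hs : a ≤ s := ha.trans hs₀.le
  obtain ⟨β, hβ, hβ₀, hβ₁⟩ : ∃ β : ℝ, 0 < β ∧ β ≤ s - s₀ ∧ β ≤ s₁ - s :=
    ⟨min (s - s₀) (s₁ - s), lt_min (by linarith) (by linarith), min_le_left _ _, min_le_right _ _⟩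
  obtain ⟨K, hK, hKle⟩ := SX.exists_weightedSeq_le_geomConv hNE hq hNF ha hs₀.le hs₁.le hβ hβ₀ hβ₁
    C₀ C₁
  set ρ : ℝ≥0∞ := ENNReal.ofReal ((2 : ℝ) ^ (-β)) with hρ
  have hρ1 : ρ < 1 := by
    rw [hρ, ENNReal.ofReal_lt_one]
    exact Real.rpow_lt_one_of_one_lt_of_neg one_lt_two (by linarith)
  have hpt : ∀ v, v ∈ SX.mem s → SX.nrm s v < r → ∃ n₀ : ℕ, ∃ δ : ℝ, 0 < δ ∧
      ∀ w, w ∈ SX.mem s → SX.nrm s w < r → SX.nrm s (w - v) < δ → ∀ n, n₀ ≤ n →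
        weightedSeq NF s (SY.L (Φ w)) n ≤ K * geomConv ρ (weightedSeq NE s (SX.L w)) n := by
    intro v hv hvr
    obtain ⟨n₀, δ, hδ, hball⟩ := SX.exists_smoothS_mem_ball hNE hq hs hv hvr
    refine ⟨n₀, δ, hδ, fun w hw hwr hwv n hn => ?_⟩
    obtain ⟨hm, hn'⟩ := hball w hw hwv n hn
    exact hKle w hw n _ _ (hlip w _ hw hwr hm hn')
      (htame _ ⟨_, fun σ => memSigma_smoothS hNE le_rfl σ n _, rfl⟩ hm hn')
  have hLmem : ∀ v ∈ SX.mem s, MemLq q (weightedSeq NE s (SX.L v)) := fun v hv =>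
    (memSigma_iff_memLq hNE s q _).1 (SX.L_mem s hs v hv)
  have hmain : ∀ v, v ∈ SX.mem s → SX.nrm s v < r → Φ v ∈ SY.mem s := by
    intro v hv hvr
    obtain ⟨n₀, δ, hδ, h⟩ := hpt v hv hvr
    rw [← SY.R_L (Φ v)]
    refine SY.R_mem s hs _ ((memSigma_iff_memLq hNF s q _).2 ?_)
    rw [← indicator_Iio_add_indicator_Ici (weightedSeq NF s (SY.L (Φ v))) n₀]
    refine (memLq_indicator_Iio hq (weightedSeq_ne_top NF s _) n₀).add hq
      ((((hLmem v hv).geomConv hq hρ1).const_mul hq hK).mono ?_)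
    refine Set.indicator_le fun n hn => h v hv hvr ?_ n hn
    rwa [sub_self, (SX.nrm_eq_zero s hs 0 (SX.mem s).zero_mem).2 rfl]
  refine ⟨hmain, fun v hv hvr ε hε => ?_⟩
  obtain ⟨n₀, δ₀, hδ₀, hvn⟩ := hpt v hv hvr
  obtain ⟨CR, hCR, hR⟩ := SY.R_bound s hs
  obtain ⟨CL, hCL, hL⟩ := SX.L_bound s hs
  set G : ℝ≥0∞ := ∑' m : ℤ, ρ ^ m.natAbs with hG
  have hGt : G ≠ ⊤ := tsum_int_pow_natAbs_ne_top hρ1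
  obtain ⟨ε', hε'0, hε't, hε'⟩ : ∃ ε' : ℝ≥0∞, 0 < ε' ∧ ε' ≠ ⊤ ∧ CR * ε'.toReal < ε :=
    ⟨ENNReal.ofReal (ε / (2 * CR)), by simpa using by positivity, ENNReal.ofReal_ne_top, by
      rw [ENNReal.toReal_ofReal (by positivity)]
      field_simp
      linarith⟩
  obtain ⟨n₁, hn₁, htail⟩ : ∃ n₁, n₀ ≤ n₁ ∧ K * (2 * lqNorm q ((Set.Ici n₁).indicator
      (geomConv ρ (weightedSeq NE s (SX.L v))))) ≤ ε' / 2 := by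
    have h := ENNReal.Tendsto.const_mul (ENNReal.Tendsto.const_mul
      (((hLmem v hv).geomConv hq hρ1).tendsto_indicator_Ici hq)
      (Or.inr (ENNReal.ofNat_ne_top (n := 2)))) (Or.inr hK)
    simp only [mul_zero] at h
    obtain ⟨n, hn⟩ := ENNReal.tendsto_atTop_zero.1 h (ε' / 2) (ENNReal.half_pos hε'0.ne')
    exact ⟨max n n₀, le_max_right _ _, hn _ (le_max_left _ _)⟩
  set H : ℝ≥0∞ := ∑ k ∈ Finset.range n₁, ENNReal.ofReal ((2 : ℝ) ^ ((k : ℝ) * (s - s₀))) with hH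
  have hHt : H ≠ ⊤ := ENNReal.sum_ne_top.2 fun _ _ => ENNReal.ofReal_ne_top
  set M : ℝ≥0∞ := H * (ENNReal.ofReal C₀ * G) + K * G with hM
  have hMt : M ≠ ⊤ := by finiteness
  obtain ⟨δ, hδ0, hδδ₀, hδM⟩ : ∃ δ : ℝ, 0 < δ ∧ δ < δ₀ ∧ M * ENNReal.ofReal (CL * δ) < ε' / 2 := by
    have h : Tendsto (fun δ : ℝ => M * ENNReal.ofReal (CL * δ)) (nhdsWithin 0 (Set.Ioi 0))
        (nhds 0) := by
      have h1 : Tendsto (fun δ : ℝ => CL * δ) (nhdsWithin 0 (Set.Ioi 0)) (nhds 0) := by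
        have : Continuous fun δ : ℝ => CL * δ := by fun_prop
        simpa using (this.tendsto 0).mono_left nhdsWithin_le_nhds
      simpa using ENNReal.Tendsto.const_mul (ENNReal.tendsto_ofReal h1) (Or.inr hMt)
    have hsmall : ∀ᶠ δ : ℝ in nhdsWithin 0 (Set.Ioi 0), δ ∈ Set.Ioo 0 δ₀ := Ioo_mem_nhdsGT hδ₀
    obtain ⟨δ, hδ, hδ1, hδ2⟩ :=
      ((h.eventually_lt_const (ENNReal.half_pos hε'0.ne')).and hsmall).exists
    exact ⟨δ, hδ1, hδ2, hδ⟩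
  refine ⟨δ, hδ0, fun w hw hwr hwv => ?_⟩
  have hwv' := (SX.mem s).sub_mem hw hv
  set D : ℝ≥0∞ := sigmaNorm NE s q (SX.L (w - v)) with hD
  have hDle : D ≤ ENNReal.ofReal (CL * δ) :=
    (hL _ hwv').trans (ENNReal.ofReal_le_ofReal (by gcongr))
  set c := weightedSeq NE s (SX.L v) with hc
  set d := weightedSeq NE s (SX.L (w - v)) with hd
  set e := weightedSeq NF s (SY.L (Φ w) - SY.L (Φ v)) with he
  have hconv : lqNorm q (geomConv ρ d) ≤ G * D := lqNorm_geomConv_le hq ρ d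
  have hhead : lqNorm q ((Set.Iio n₁).indicator e) ≤ H * (ENNReal.ofReal C₀ * G) * D := by
    refine (lqNorm_indicator_Iio_le hq e n₁).trans ?_
    rw [hH, mul_assoc, Finset.sum_mul]
    refine Finset.sum_le_sum fun k _ => ?_
    rw [he, ← weightedSeq_rescale NF s s₀, mul_assoc (ENNReal.ofReal C₀)]
    gcongr
    calc weightedSeq NF s₀ (SY.L (Φ w) - SY.L (Φ v)) k
        ≤ sigmaNorm NF s₀ ⊤ (SY.L (Φ w) - SY.L (Φ v)) := le_lqNorm le_top _ k
      _ ≤ ENNReal.ofReal C₀ * sigmaNorm NE s₀ 1 (SX.L (w - v)) := by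
          rw [map_sub]
          exact hlip w v hw hwr hv hvr
      _ ≤ ENNReal.ofReal C₀ * (G * D) := by
          gcongr
          exact (sigmaNorm_one_le_geomConv hβ₀ _).trans ((le_lqNorm hq _ 0).trans hconv)
  have hcw : geomConv ρ (weightedSeq NE s (SX.L w)) ≤ geomConv ρ c + geomConv ρ d := by
    rw [← geomConv_add]
    refine geomConv_mono ρ ?_
    have h := weightedSeq_add_le hNE s (SX.L v) (SX.L (w - v))
    rwa [← map_add, add_sub_cancel] at h
  have hhigh : lqNorm q ((Set.Ici n₁).indicator e) ≤ ε' / 2 + K * G * D := by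
    have hle : (Set.Ici n₁).indicator e ≤
        (fun k => K * (2 * (Set.Ici n₁).indicator (geomConv ρ c) k)) +
          fun k => K * geomConv ρ d k := by
      refine Set.indicator_le' (fun k hk => ?_) fun _ _ => zero_le
      have hk0 : n₀ ≤ k := hn₁.trans hk
      have hv0 : SX.nrm s (v - v) < δ₀ := by
        rwa [sub_self, (SX.nrm_eq_zero s hs 0 (SX.mem s).zero_mem).2 rfl]
      rw [Pi.add_apply, Set.indicator_of_mem hk]
      calc e k ≤ weightedSeq NF s (SY.L (Φ w)) k + weightedSeq NF s (SY.L (Φ v)) k :=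
            weightedSeq_sub_le hNF s _ _ k
        _ ≤ K * (geomConv ρ c k + geomConv ρ d k) + K * geomConv ρ c k := by
            gcongr
            · refine (hvn w hw hwr (hwv.trans hδδ₀) k hk0).trans ?_
              gcongr
              exact hcw k
            · exact hvn v hv hvr hv0 k hk0
        _ = K * (2 * geomConv ρ c k) + K * geomConv ρ d k := by ring
    refine (lqNorm_mono q hle).trans ((lqNorm_add_le hq _ _).trans ?_)
    rw [lqNorm_const_mul hq, lqNorm_const_mul hq, lqNorm_const_mul hq, mul_assoc K]
    gcongr
  have hfinal : sigmaNorm NF s q (SY.L (Φ w) - SY.L (Φ v)) ≤ ε' := by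
    rw [sigmaNorm_eq_lqNorm, ← he, ← indicator_Iio_add_indicator_Ici e n₁]
    calc _ ≤ H * (ENNReal.ofReal C₀ * G) * D + (ε' / 2 + K * G * D) :=
          (lqNorm_add_le hq _ _).trans (add_le_add hhead hhigh)
      _ = M * D + ε' / 2 := by rw [hM]; ring
      _ ≤ ε' / 2 + ε' / 2 := by
          gcongr
          exact (mul_le_mul_right hDle M).trans hδM.le
      _ = ε' := ENNReal.add_halves ε'
  have hmemY := SY.L_mem s hs _ ((SY.mem s).sub_mem (hmain w hw hwr) (hmain v hv hvr))
  have hRb := hR _ hmemY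
  rw [SY.R_L, map_sub] at hRb
  refine (hRb.trans ?_).trans_lt hε'
  gcongr
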